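/- Let 1 < p < ∞, 0 < s < 1 and −1/(p−1) < β < sp/(p−1). Define λ(β,s,p) = 2∫₀¹ J_p(1−τ^β)(1 − τ^{sp−1−β(p−1)})/(1−τ)^{1+sp} dτ + 2/(sp), and for 0 < ε < 1 define λ_ε(β,s,p) = 2∫₀^{1/(1+ε)} J_p(1−τ^β)/(1−τ)^{1+sp} dτ + 2∫_{1+ε}^∞ J_p(1−τ^β)/(1−τ)^{1+sp} dτ + 2/(sp). Then lim_{ε→0} λ_ε(β,s,p) = λ(β,s,p). -/

import Mathlib

/-!
The idea is to fold the integral over `(1 + ε, ∞)` back onto `(0, 1/(1 + ε))` by the inversion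
`τ ↦ 1/τ`. Since `J_p` is odd and `(p - 1)`-homogeneous, `J_p(1 - τ^{-β}) = -τ^{-β(p-1)} J_p(1 - τ^β)`,
so that the two integrals in `λ_ε` combine into the single integral over `(0, 1/(1 + ε))` of the
integrand `g` of `λ` (`folded_integral_eq`). The limit then follows by dominated convergence from
the integrability of `g` on `(0, 1)`.

Integrability rests on the elementary bound `|1 - τ^a| ≤ C (1 - τ) τ^{min(a, 0)}` on `(0, 1)`
(`abs_one_sub_rpow_le`), which gives `|g(τ)| ≤ C τ^e (1 - τ)^{p - 1 - sp}`. The hypotheses on `β`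
give `e > -1`, and `s < 1` gives `p - 1 - sp > -1`, so `g` is dominated by a convergent Beta
integrand.
-/


open MeasureTheory Real Filter Topology ENNReal

noncomputable section

/-- The Heisenberg group `ℍⁿ` as `ℝⁿ × ℝⁿ × ℝ`. -/
abbrev Heis (n : ℕ) : Type := (Fin n → ℝ) × (Fin n → ℝ) × ℝ

/-- Group law `ξ ∘ ξ' = (x+x', y+y', t+t'+2⟨y,x'⟩−2⟨x,y'⟩)`. -/
def Hmul {n : ℕ} (a b : Heis n) : Heis n :=
  (a.1 + b.1, a.2.1 + b.2.1,
    a.2.2 + b.2.2 + 2 * (∑ i, a.2.1 i * b.1 i) - 2 * (∑ i, a.1 i * b.2.1 i))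

/-- Group inverse `ξ⁻¹ = −ξ`. -/
def Hinv {n : ℕ} (a : Heis n) : Heis n := (-a.1, -a.2.1, -a.2.2)

/-- Squared Euclidean norm of the horizontal part `z = (x,y) ∈ ℝ^{2n}`. -/
def zsq {n : ℕ} (a : Heis n) : ℝ := (∑ i, (a.1 i) ^ 2) + (∑ i, (a.2.1 i) ^ 2)

/-- Euclidean norm `|z|` of the horizontal part. -/
def znorm {n : ℕ} (a : Heis n) : ℝ := Real.sqrt (zsq a)

/-- The Koranyi–Folland gauge `d(ξ) = (|z|⁴ + t²)^{1/4}`. -/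
def hd {n : ℕ} (a : Heis n) : ℝ := ((zsq a) ^ 2 + (a.2.2) ^ 2) ^ ((1 : ℝ) / 4)

/-- Homogeneous dimension `Q = 2n + 2` (as a real number). -/
def hQ (n : ℕ) : ℝ := 2 * n + 2

/-- First coordinate `x₁` of a point of `ℍⁿ`. -/
def x1 {n : ℕ} (a : Heis n) : ℝ := if h : 0 < n then a.1 ⟨0, h⟩ else 0

/-- The half-space `ℍⁿ₊ = {ξ : x₁ > 0}`. -/
def halfSpace (n : ℕ) : Set (Heis n) := {a | 0 < x1 a}

/-- Euclidean distance `|z - z'|` of the horizontal parts. -/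
def zdist {n : ℕ} (a b : Heis n) : ℝ := znorm (Hmul (Hinv a) b)

/-- `J_p(t) = |t|^{p-2} t`. -/
def Jp (p t : ℝ) : ℝ := |t| ^ (p - 2) * t

/-- The Gagliardo-type seminorm (to the `p`-th power)
`[f]_{s,p,α,Ω}^p = ∫_Ω ∫_Ω |f(ξ)-f(ξ')|^p / (d(ξ⁻¹∘ξ')^{Q+sp} |z-z'|^α)`. -/
def gagSem {n : ℕ} (p s α : ℝ) (Ω : Set (Heis n)) (f : Heis n → ℝ) : ℝ≥0∞ :=
  ∫⁻ ξ in Ω, ∫⁻ ξ' in Ω, ENNReal.ofReal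
    (|f ξ - f ξ'| ^ p / (hd (Hmul (Hinv ξ) ξ') ^ (hQ n + s * p) * zdist ξ ξ' ^ α))

/-- The seminorm for `α = 0` (no horizontal weight). -/
def gagSem0 {n : ℕ} (p s : ℝ) (Ω : Set (Heis n)) (f : Heis n → ℝ) : ℝ≥0∞ :=
  ∫⁻ ξ in Ω, ∫⁻ ξ' in Ω, ENNReal.ofReal
    (|f ξ - f ξ'| ^ p / hd (Hmul (Hinv ξ) ξ') ^ (hQ n + s * p))

/-- The strip `𝒟_{r,R} = {ξ : r < x₁ < R}`. -/
def strip (n : ℕ) (r R : ℝ) : Set (Heis n) := {ξ | r < x1 ξ ∧ x1 ξ < R}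

/-- `f ∈ W^{s,p,α}_{loc(x₁)}(ℍⁿ₊)`. -/
def MemWlocx1 (n : ℕ) (p s α : ℝ) (f : Heis n → ℝ) : Prop :=
  Measurable f ∧ ∀ r R : ℝ, 0 < r → r < R →
    (∫⁻ ξ in strip n r R, ENNReal.ofReal (|f ξ| ^ p)) < ⊤ ∧
    gagSem p s α (strip n r R) f < ⊤

/-- `f ∈ L^{p-1}_{sp,α}(ℍⁿ)`. -/
def MemLsp (n : ℕ) (p s α : ℝ) (f : Heis n → ℝ) : Prop :=
  Measurable f ∧
  (∀ K : Set (Heis n), IsCompact K →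
    (∫⁻ ξ in K, ENNReal.ofReal (|f ξ| ^ (p - 1))) < ⊤) ∧
  (∫⁻ ξ, ENNReal.ofReal (|f ξ| ^ (p - 1) /
      ((1 + hd ξ) ^ (hQ n + s * p) * (1 + znorm ξ) ^ α))) < ⊤

/-- `φ ∈ W^{s,p,α}(Ω)`. -/
def MemW (n : ℕ) (p s α : ℝ) (Ω : Set (Heis n)) (φ : Heis n → ℝ) : Prop :=
  Measurable φ ∧ (∫⁻ ξ in Ω, ENNReal.ofReal (|φ ξ| ^ p)) < ⊤ ∧ gagSem p s α Ω φ < ⊤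

/-- `φ ∈ W^{s,p}(Ω)` (the case `α = 0`). -/
def MemW0 (n : ℕ) (p s : ℝ) (Ω : Set (Heis n)) (φ : Heis n → ℝ) : Prop :=
  Measurable φ ∧ (∫⁻ ξ in Ω, ENNReal.ofReal (|φ ξ| ^ p)) < ⊤ ∧ gagSem0 p s Ω φ < ⊤

/-- `f ∈ W^{s,p}_{loc}(ℍⁿ₊)`. -/
def MemWloc0 (n : ℕ) (p s : ℝ) (f : Heis n → ℝ) : Prop :=
  Measurable f ∧ ∀ K : Set (Heis n), IsCompact K → K ⊆ halfSpace n →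
    (∫⁻ ξ in K, ENNReal.ofReal (|f ξ| ^ p)) < ⊤ ∧ gagSem0 p s K f < ⊤

/-- `f ∈ L^{p-1}_{sp}(ℍⁿ)`. -/
def MemLsp0 (n : ℕ) (p s : ℝ) (f : Heis n → ℝ) : Prop :=
  Measurable f ∧
  (∀ K : Set (Heis n), IsCompact K →
    (∫⁻ ξ in K, ENNReal.ofReal (|f ξ| ^ (p - 1))) < ⊤) ∧
  (∫⁻ ξ, ENNReal.ofReal (|f ξ| ^ (p - 1) / (1 + hd ξ) ^ (hQ n + s * p))) < ⊤

/-- Surface measure of the unit sphere `S^{m-1} ⊂ ℝ^m`: `|S^{m-1}| = 2π^{m/2}/Γ(m/2)`. -/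
def sphereArea (m : ℕ) : ℝ := 2 * Real.pi ^ ((m : ℝ) / 2) / Real.Gamma ((m : ℝ) / 2)

/-- `ℐ(k,θ,α) = (∫₀^∞ (1+t²)^{-(k+2+θ)/4} dt) (∫₀^∞ r^{k-2}(1+r²)^{-(k+θ+α)/2} dr)`. -/
def calI (k : ℕ) (θ α : ℝ) : ℝ :=
  (∫ t in Set.Ioi (0 : ℝ), (1 + t ^ 2) ^ (-(((k : ℝ) + 2 + θ) / 4))) *
  (∫ r in Set.Ioi (0 : ℝ), r ^ ((k : ℝ) - 2) * (1 + r ^ 2) ^ (-(((k : ℝ) + θ + α) / 2)))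

/-- `Λ_{s,p,α} = 2∫₀¹ |1-τ^{(sp+α-1)/p}|^p/(1-τ)^{1+sp+α} dτ + 2/(sp+α)`. -/
def LamC (s p α : ℝ) : ℝ :=
  2 * (∫ τ in Set.Ioo (0 : ℝ) 1,
      |1 - τ ^ ((s * p + α - 1) / p)| ^ p / (1 - τ) ^ (1 + s * p + α)) + 2 / (s * p + α)

/-- `u_β(τ) = τ^β` for `τ > 0`, extended by `0`. -/
def ubeta (β τ : ℝ) : ℝ := if 0 < τ then τ ^ β else 0

/-- `λ(β,s,p)`. -/
def lam (p s β : ℝ) : ℝ :=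
  2 * (∫ τ in Set.Ioo (0 : ℝ) 1,
      Jp p (1 - τ ^ β) * (1 - τ ^ (s * p - 1 - β * (p - 1))) / (1 - τ) ^ (1 + s * p)) +
  2 / (s * p)

/-- `λ_ε(β,s,p)`. -/
def lamEps (p s β ε : ℝ) : ℝ :=
  2 * (∫ τ in Set.Ioo (0 : ℝ) (1 / (1 + ε)), Jp p (1 - τ ^ β) / |1 - τ| ^ (1 + s * p)) +
  2 * (∫ τ in Set.Ioi (1 + ε), Jp p (1 - τ ^ β) / |1 - τ| ^ (1 + s * p)) +
  2 / (s * p)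

/-- The box `D_{R₀}`. -/
def boxD (n : ℕ) (R₀ : ℝ) : Set (Heis n) :=
  {ξ | (∀ i, |ξ.1 i| ≤ R₀) ∧ (∀ i, |ξ.2.1 i| ≤ R₀) ∧ |ξ.2.2| ≤ R₀ ^ 2}

/-- The box `D_{R₀,t}`. -/
def boxDt (n : ℕ) (R₀ : ℝ) : Set (Heis n) :=
  {ξ | (∀ i, |ξ.1 i| ≤ R₀) ∧ (∀ i, |ξ.2.1 i| ≤ R₀) ∧ |ξ.2.2| ≤ R₀ ^ 2 + R₀}

/-! ### The nonlinearity `J_p` and the bound on `1 - τ^a` -/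

theorem abs_Jp {p : ℝ} (hp : 1 < p) (t : ℝ) : |Jp p t| = |t| ^ (p - 1) := by
  rcases eq_or_ne t 0 with rfl | ht
  · simp [Jp, Real.zero_rpow (by linarith : p - 1 ≠ 0)]
  · have h : 0 < |t| := abs_pos.2 ht
    rw [Jp, abs_mul, abs_of_pos (Real.rpow_pos_of_pos h _)]
    nth_rewrite 2 [← Real.rpow_one |t|]
    rw [← Real.rpow_add h]
    congr 1; ring

theorem Jp_neg (p t : ℝ) : Jp p (-t) = -Jp p t := by
  simp [Jp]

theorem Jp_mul {p c : ℝ} (hc : 0 < c) (t : ℝ) : Jp p (c * t) = c ^ (p - 1) * Jp p t := by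
  have h : c ^ (p - 1) = c ^ (p - 2) * c := by
    nth_rewrite 3 [← Real.rpow_one c]
    rw [← Real.rpow_add hc]
    congr 1; ring
  rw [Jp, Jp, abs_mul, abs_of_pos hc, Real.mul_rpow hc.le (abs_nonneg _), h]
  ring

theorem one_sub_rpow_le {a τ : ℝ} (ha : 0 ≤ a) (h0 : 0 < τ) (h1 : τ < 1) :
    |1 - τ ^ a| ≤ max 1 |a| * (1 - τ) := by
  have hle : τ ^ a ≤ 1 := Real.rpow_le_one h0.le h1.le ha
  rw [abs_of_nonneg (by linarith), abs_of_nonneg ha]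
  rcases le_total a 1 with h | h
  · have : τ ^ (1 : ℝ) ≤ τ ^ a := Real.rpow_le_rpow_of_exponent_ge h0 h1.le h
    rw [Real.rpow_one] at this
    rw [max_eq_left h]; linarith
  · -- Bernoulli's inequality at `τ = 1 + (τ - 1)`
    have := one_add_mul_self_le_rpow_one_add (s := τ - 1) (by linarith) h
    rw [add_sub_cancel] at this
    rw [max_eq_right h]; linarith

/-- First-order vanishing at `τ = 1` together with the exact growth rate at `τ = 0`, in a single
bound on `(0, 1)`. -/
theorem abs_one_sub_rpow_le (a : ℝ) {τ : ℝ} (h0 : 0 < τ) (h1 : τ < 1) :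
    |1 - τ ^ a| ≤ max 1 |a| * (1 - τ) * τ ^ (min a 0) := by
  rcases le_total 0 a with ha | ha
  · rw [min_eq_right ha, Real.rpow_zero, mul_one]
    exact one_sub_rpow_le ha h0 h1
  · rw [min_eq_left ha]
    have h := one_sub_rpow_le (neg_nonneg.2 ha) h0 h1
    rw [abs_neg] at h
    have hpos : 0 < τ ^ a := Real.rpow_pos_of_pos h0 a
    have e : 1 - τ ^ a = -(1 - τ ^ (-a)) * τ ^ a := by
      rw [Real.rpow_neg h0.le]; field_simp; ring
    rw [e, abs_mul, abs_neg, abs_of_pos hpos]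
    gcongr

theorem abs_Jp_one_sub_rpow_le {p : ℝ} (hp : 1 < p) (β : ℝ) {τ : ℝ} (h0 : 0 < τ) (h1 : τ < 1) :
    |Jp p (1 - τ ^ β)| ≤
      max 1 |β| ^ (p - 1) * τ ^ (min (β * (p - 1)) 0) * (1 - τ) ^ (p - 1) := by
  have hp' : 0 ≤ p - 1 := by linarith
  have hτ : 0 ≤ 1 - τ := by linarith
  have hK : 0 ≤ max 1 |β| := zero_le_one.trans (le_max_left _ _)
  have hmin : min (β * (p - 1)) 0 = min β 0 * (p - 1) := by
    rw [min_mul_of_nonneg _ _ hp', zero_mul]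
  rw [abs_Jp hp, hmin, Real.rpow_mul h0.le]
  refine (Real.rpow_le_rpow (abs_nonneg _) (abs_one_sub_rpow_le β h0 h1) hp').trans_eq ?_
  rw [Real.mul_rpow (by positivity) (by positivity), Real.mul_rpow hK hτ]
  ring

/-! ### Integrability by comparison with Beta integrands -/

theorem integrableOn_beta {e q : ℝ} (he : -1 < e) (hq : -1 < q) :
    IntegrableOn (fun τ : ℝ => τ ^ e * (1 - τ) ^ q) (Set.Ioo 0 1) := by
  have h := Complex.betaIntegral_convergent (u := ((e + 1 : ℝ) : ℂ)) (v := ((q + 1 : ℝ) : ℂ))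
    (by rw [Complex.ofReal_re]; linarith) (by rw [Complex.ofReal_re]; linarith)
  rw [intervalIntegrable_iff_integrableOn_Ioo_of_le zero_le_one] at h
  refine IntegrableOn.congr_fun h.norm (fun τ hτ => ?_) measurableSet_Ioo
  have h1 : 0 < 1 - τ := by linarith [hτ.2]
  have e1 : (1 - (τ : ℂ)) = ((1 - τ : ℝ) : ℂ) := by push_cast; rfl
  rw [norm_mul, e1, Complex.norm_cpow_eq_rpow_re_of_pos hτ.1,
    Complex.norm_cpow_eq_rpow_re_of_pos h1]
  simp

theorem integrableOn_of_le_beta {F : ℝ → ℝ} (hF : Measurable F) {C e q : ℝ}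
    (he : -1 < e) (hq : -1 < q)
    (hb : ∀ τ ∈ Set.Ioo (0 : ℝ) 1, |F τ| ≤ C * (τ ^ e * (1 - τ) ^ q)) :
    IntegrableOn F (Set.Ioo 0 1) := by
  refine Integrable.mono' ((integrableOn_beta he hq).const_mul C) hF.aestronglyMeasurable ?_
  exact (ae_restrict_mem measurableSet_Ioo).mono hb

/-- Away from `τ = 1`, the exponent `q` of `1 - τ` is unrestricted. -/
theorem integrableOn_Ioo_of_le_beta {F : ℝ → ℝ} (hF : Measurable F) {C e q r : ℝ}
    (hC : 0 ≤ C) (he : -1 < e) (hr : r < 1)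
    (hb : ∀ τ ∈ Set.Ioo (0 : ℝ) 1, |F τ| ≤ C * (τ ^ e * (1 - τ) ^ q)) :
    IntegrableOn F (Set.Ioo 0 r) := by
  have hsub : Set.Ioo 0 r ⊆ Set.Ioo (0 : ℝ) 1 := Set.Ioo_subset_Ioo_right hr.le
  have hi : IntegrableOn (fun τ : ℝ => τ ^ e * (1 - τ) ^ (0 : ℝ)) (Set.Ioo 0 r) :=
    (integrableOn_beta he (by norm_num)).mono_set hsub
  refine Integrable.mono' (hi.const_mul (C * (1 + (1 - r) ^ q))) hF.aestronglyMeasurable ?_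
  filter_upwards [ae_restrict_mem measurableSet_Ioo] with τ hτ
  have h1 : 0 < 1 - τ := by linarith [hτ.2]
  have hr' : 0 < 1 - r := by linarith
  have hpow : (1 - τ) ^ q ≤ 1 + (1 - r) ^ q := by
    rcases le_total 0 q with h | h
    · have := Real.rpow_le_one h1.le (by linarith [hτ.1]) h
      have := Real.rpow_nonneg hr'.le q
      linarith
    · have := Real.rpow_le_rpow_of_nonpos hr' (by linarith [hτ.2] : 1 - r ≤ 1 - τ) h
      linarith
  have hτe : 0 ≤ τ ^ e := Real.rpow_nonneg hτ.1.le e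
  calc ‖F τ‖ ≤ C * (τ ^ e * (1 - τ) ^ q) := hb τ (hsub hτ)
    _ ≤ C * (τ ^ e * (1 + (1 - r) ^ q)) := by gcongr
    _ = _ := by rw [Real.rpow_zero]; ring

@[fun_prop]
theorem measurable_Jp (p : ℝ) : Measurable (Jp p) := by
  unfold Jp; fun_prop

/-! ### Inversion and folding of the two integrals -/

/-- The inversion `τ ↦ 1/τ`. It holds without any integrability assumption. -/
theorem integral_Ioi_eq_integral_Ioo (p s β : ℝ) {r : ℝ} (hr0 : 0 < r) (hr1 : r < 1) :
    ∫ τ in Set.Ioi r⁻¹, Jp p (1 - τ ^ β) / |1 - τ| ^ (1 + s * p) =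
      ∫ τ in Set.Ioo 0 r,
        -(Jp p (1 - τ ^ β) / (1 - τ) ^ (1 + s * p) * τ ^ (s * p - 1 - β * (p - 1))) := by
  have himg : Set.image (fun x : ℝ => x⁻¹) (Set.Ioo 0 r) = Set.Ioi r⁻¹ := by
    rw [Set.image_inv_eq_inv, Set.inv_Ioo_0_left hr0]
  rw [← himg, integral_image_eq_integral_abs_deriv_smul measurableSet_Ioo
    (fun x hx => (hasDerivAt_inv hx.1.ne').hasDerivWithinAt) inv_injective.injOn]
  refine setIntegral_congr_fun measurableSet_Ioo (fun τ hτ => ?_)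
  have h0 : 0 < τ := hτ.1
  have h1 : 0 < 1 - τ := by linarith [hτ.2]
  have hJ : Jp p (1 - τ⁻¹ ^ β) = -(τ ^ (-(β * (p - 1))) * Jp p (1 - τ ^ β)) := by
    have e : 1 - τ⁻¹ ^ β = -(τ ^ (-β) * (1 - τ ^ β)) := by
      rw [Real.inv_rpow h0.le, Real.rpow_neg h0.le]
      have := Real.rpow_pos_of_pos h0 β
      field_simp; ring
    rw [e, Jp_neg, Jp_mul (Real.rpow_pos_of_pos h0 _), ← Real.rpow_mul h0.le, neg_mul]
  have hden : |1 - τ⁻¹| = (1 - τ) * τ⁻¹ := by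
    rw [abs_sub_comm, abs_of_nonneg (by rw [sub_nonneg]; exact (one_le_inv₀ h0).2 (by linarith))]
    field_simp
  have hexp : τ ^ (s * p - 1 - β * (p - 1)) =
      (τ ^ 2)⁻¹ * (τ ^ (-(β * (p - 1))) * τ ^ (1 + s * p)) := by
    rw [← Real.rpow_natCast τ 2, ← Real.rpow_neg h0.le, ← Real.rpow_add h0, ← Real.rpow_add h0]
    congr 1; push_cast; ring
  have hp1 := Real.rpow_pos_of_pos h0 (1 + s * p)
  have hp2 := Real.rpow_pos_of_pos h1 (1 + s * p)
  simp only [smul_eq_mul]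
  rw [hJ, hden, Real.mul_rpow h1.le (inv_nonneg.2 h0.le), Real.inv_rpow h0.le, hexp, abs_neg,
    abs_of_pos (by positivity)]
  field_simp

theorem abs_integrand_le {p : ℝ} (hp : 1 < p) (s β : ℝ) {τ : ℝ} (hτ : τ ∈ Set.Ioo (0 : ℝ) 1) :
    |Jp p (1 - τ ^ β) / (1 - τ) ^ (1 + s * p)| ≤
      max 1 |β| ^ (p - 1) *
        (τ ^ (min (β * (p - 1)) 0) * (1 - τ) ^ (p - 1 - (1 + s * p))) := by
  have h1 : 0 < 1 - τ := by linarith [hτ.2]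
  rw [abs_div, abs_of_pos (Real.rpow_pos_of_pos h1 _), Real.rpow_sub h1, ← mul_div_assoc,
    ← mul_div_assoc, ← mul_assoc]
  exact div_le_div_of_nonneg_right (abs_Jp_one_sub_rpow_le hp β hτ.1 hτ.2)
    (Real.rpow_pos_of_pos h1 _).le

theorem integrableOn_lam_integrand {p s β : ℝ} (hp : 1 < p) (hs0 : 0 < s) (hs1 : s < 1)
    (hb1 : -1 < β * (p - 1)) (hb2 : β * (p - 1) < s * p) :
    IntegrableOn (fun τ : ℝ => Jp p (1 - τ ^ β) * (1 - τ ^ (s * p - 1 - β * (p - 1))) /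
      (1 - τ) ^ (1 + s * p)) (Set.Ioo 0 1) := by
  set b := β * (p - 1) with hb
  set γ := s * p - 1 - b with hγ
  have hsp : 0 < s * p := by positivity
  -- when both `b` and `γ` are negative, their sum is `sp - 1 > -1`
  have he : -1 < min b 0 + min γ 0 := by
    rcases min_cases b 0 with ⟨h, _⟩ | ⟨h, _⟩ <;> rcases min_cases γ 0 with ⟨h', _⟩ | ⟨h', _⟩ <;>
      rw [h, h'] <;> linarith
  have hq : -1 < p - 1 - (1 + s * p) + 1 := by nlinarith
  refine integrableOn_of_le_beta (by fun_prop) (C := max 1 |β| ^ (p - 1) * max 1 |γ|) he hq ?_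
  intro τ hτ
  have h0 : 0 < τ := hτ.1
  have h1 : 0 < 1 - τ := by linarith [hτ.2]
  rw [mul_div_right_comm, abs_mul]
  refine (mul_le_mul (abs_integrand_le hp s β hτ) (abs_one_sub_rpow_le γ hτ.1 hτ.2)
    (abs_nonneg _) (by positivity)).trans_eq ?_
  rw [Real.rpow_add h0, Real.rpow_add h1, Real.rpow_one]
  ring

theorem folded_integral_eq {p s β r : ℝ} (hp : 1 < p) (hs0 : 0 < s)
    (hb1 : -1 < β * (p - 1)) (hb2 : β * (p - 1) < s * p) (hr0 : 0 < r) (hr1 : r < 1) :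
    (∫ τ in Set.Ioo 0 r, Jp p (1 - τ ^ β) / |1 - τ| ^ (1 + s * p)) +
      (∫ τ in Set.Ioi r⁻¹, Jp p (1 - τ ^ β) / |1 - τ| ^ (1 + s * p)) =
    ∫ τ in Set.Ioo 0 r,
      Jp p (1 - τ ^ β) * (1 - τ ^ (s * p - 1 - β * (p - 1))) / (1 - τ) ^ (1 + s * p) := by
  have hsp : 0 < s * p := by positivity
  have hK : 0 ≤ max 1 |β| ^ (p - 1) := by positivity
  have i1 : IntegrableOn (fun τ : ℝ => Jp p (1 - τ ^ β) / (1 - τ) ^ (1 + s * p))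
      (Set.Ioo 0 r) :=
    integrableOn_Ioo_of_le_beta (by fun_prop) hK (lt_min hb1 (by norm_num)) hr1
      (fun τ hτ => abs_integrand_le hp s β hτ)
  have i2 : IntegrableOn (fun τ : ℝ => Jp p (1 - τ ^ β) / (1 - τ) ^ (1 + s * p) *
      τ ^ (s * p - 1 - β * (p - 1))) (Set.Ioo 0 r) := by
    refine integrableOn_Ioo_of_le_beta (by fun_prop) hK
      (e := min (β * (p - 1)) 0 + (s * p - 1 - β * (p - 1))) (q := p - 1 - (1 + s * p))
      ?_ hr1 (fun τ hτ => ?_)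
    · rcases min_cases (β * (p - 1)) 0 with ⟨h, _⟩ | ⟨h, _⟩ <;> rw [h] <;> linarith
    · have hpos := Real.rpow_pos_of_pos hτ.1 (s * p - 1 - β * (p - 1))
      rw [abs_mul, abs_of_pos hpos, Real.rpow_add hτ.1]
      refine (mul_le_mul_of_nonneg_right (abs_integrand_le hp s β hτ) hpos.le).trans_eq ?_
      ring
  have habs : ∫ τ in Set.Ioo 0 r, Jp p (1 - τ ^ β) / |1 - τ| ^ (1 + s * p) =
      ∫ τ in Set.Ioo 0 r, Jp p (1 - τ ^ β) / (1 - τ) ^ (1 + s * p) :=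
    setIntegral_congr_fun measurableSet_Ioo (fun τ hτ => by
      rw [abs_of_pos (by linarith [hτ.2] : 0 < 1 - τ)])
  rw [habs, integral_Ioi_eq_integral_Ioo p s β hr0 hr1, integral_neg, ← sub_eq_add_neg,
    ← integral_sub i1 i2]
  refine setIntegral_congr_fun measurableSet_Ioo (fun τ _ => ?_)
  ring

/-! ### Passage to the limit -/

theorem tendsto_integral_Ioo {g : ℝ → ℝ} (hg : IntegrableOn g (Set.Ioo 0 1)) :
    Tendsto (fun ε : ℝ => ∫ τ in Set.Ioo 0 (1 / (1 + ε)), g τ) (𝓝[>] 0)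
      (𝓝 (∫ τ in Set.Ioo 0 1, g τ)) := by
  have hlim : Tendsto (fun ε : ℝ => 1 / (1 + ε)) (𝓝[>] 0) (𝓝 1) := by
    have h : ContinuousAt (fun ε : ℝ => 1 / (1 + ε)) 0 := by
      refine ContinuousAt.div (by fun_prop) (by fun_prop) (by norm_num)
    have := h.tendsto
    simp only [add_zero, div_one] at this
    exact this.mono_left nhdsWithin_le_nhds
  have hcov : AECover (volume.restrict (Set.Ioo (0 : ℝ) 1)) (𝓝[>] (0 : ℝ))
      (fun ε : ℝ => Set.Ioo 0 (1 / (1 + ε))) :=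
    aecover_Ioo_of_Ioo tendsto_const_nhds hlim
  refine (hcov.integral_tendsto_of_countably_generated hg).congr' ?_
  filter_upwards [self_mem_nhdsWithin] with ε hε
  have hε' : (0 : ℝ) < ε := hε
  rw [Measure.restrict_restrict measurableSet_Ioo, Set.inter_eq_left.2]
  exact Set.Ioo_subset_Ioo_right (by rw [div_le_one (by linarith)]; linarith)

/-- Proposition 5.1(i), first part: `λ_ε(β,s,p) → λ(β,s,p)`
as `ε → 0⁺`. -/
theorem lamEps_tendsto_lam (p s β : ℝ) (hp1 : 1 < p) (hs0 : 0 < s) (hs1 : s < 1)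
    (hβl : -(1 / (p - 1)) < β) (hβu : β < s * p / (p - 1)) :
    Tendsto (fun ε => lamEps p s β ε) (nhdsWithin (0 : ℝ) (Set.Ioi 0))
      (nhds (lam p s β)) := by
  have hp' : 0 < p - 1 := by linarith
  have hb2 : β * (p - 1) < s * p := (lt_div_iff₀ hp').1 hβu
  have hb1 : -1 < β * (p - 1) := by
    rw [← neg_div] at hβl
    exact (div_lt_iff₀ hp').1 hβl
  have hlim := ((tendsto_integral_Ioo
    (integrableOn_lam_integrand hp1 hs0 hs1 hb1 hb2)).const_mul 2).add_const (2 / (s * p))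
  refine hlim.congr' ?_
  filter_upwards [self_mem_nhdsWithin] with ε hε
  have hε' : (0 : ℝ) < ε := hε
  have hr0 : 0 < 1 / (1 + ε) := by positivity
  have hr1 : 1 / (1 + ε) < 1 := by rw [div_lt_one (by linarith)]; linarith
  rw [← folded_integral_eq hp1 hs0 hb1 hb2 hr0 hr1, lamEps, one_div, inv_inv]
  ring
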